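/- arXiv:math/0512422 — 2 statements merged into one kernel-verified Lean document; each statement's English description precedes it below -/
import Mathlib

section
/- The set {1} ∪ {tⁱ, (t')ⁱ, (t'')ⁱ : i ≥ 1} is a basis of the K-vector space A = K[t, t⁻¹, (t−1)⁻¹], where t' = 1 − t⁻¹ and t'' = (1−t)⁻¹. -/
/-!
Write `a = t`, `b = t' = 1 - t⁻¹`, `c = t'' = (1 - t)⁻¹`. These three elements satisfy the cyclically
symmetric relations `a * b = a - 1`, `b * c = b - 1`, `c * a = c - 1`. Apart from the transcendence
of `t` and the fact that `A` is generated by `t`, `t⁻¹` and `(1 - t)⁻¹`, everything below uses only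
these relations, so that each argument for one of the elements applies to all three.

*Spanning.* The relations give `a * b ^ (i + 1) = a * b ^ i - b ^ i` and
`a * c ^ (i + 1) = c ^ (i + 1) - c ^ i`, so the span of the family is stable under multiplication by
`a`, and by symmetry by `b` and `c`. The elements whose multiplication preserves the span form a
subalgebra; it contains `t`, `t⁻¹ = 1 - b` and `(1 - t)⁻¹ = c`, hence is all of `A`.

*Independence.* A linear relation has the form `P(a) + Q(b) + R(c) = 0` with polynomials `P, Q, R`.
Near `a = 1` the element `c = (1 - a)⁻¹` has a pole while `a` and `b = 1 - a⁻¹` are regular. Hence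
clearing denominators by `a ^ m * (1 - a) ^ deg R` and evaluating at `a = 1` shows that `R` is
constant (`natDegree_eq_zero_of_relation`). Rotating the roles, `P` and `Q` are constant as well.
-/

open Polynomial

noncomputable section

/-- `A = K[t, t⁻¹, (t-1)⁻¹]`, the localization of `K[t]` at `t` and `t - 1`. -/
abbrev LoopAlgCoeff (K : Type*) [Field K] :=
  Localization (Submonoid.closure {(X : K[X]), X - 1})

/-- The element `t` of `A`. -/
def tElt (K : Type*) [Field K] : LoopAlgCoeff K :=
  algebraMap K[X] (LoopAlgCoeff K) X

/-- The family `{1} ∪ {tⁱ, (t')ⁱ, (t'')ⁱ : i ≥ 1}`, indexed by `Option (Fin 3 × ℕ+)`. -/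
def loopBasisFamily (K : Type*) [Field K] : Option (Fin 3 × ℕ+) → LoopAlgCoeff K :=
  fun o =>
    let t : LoopAlgCoeff K := tElt K
    let t' : LoopAlgCoeff K := 1 - Ring.inverse t
    let t'' : LoopAlgCoeff K := Ring.inverse (1 - t)
    match o with
    | none => 1
    | some (0, i) => t ^ (i : ℕ)
    | some (1, i) => t' ^ (i : ℕ)
    | some (2, i) => t'' ^ (i : ℕ)

section Relations

variable {K A : Type*} [Field K] [CommRing A] [Algebra K A]

lemma pow_mul_aeval_eq_aeval_reverse {x y : A} (h : x * y = 1) (f : K[X]) :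
    y ^ f.natDegree * aeval x f = aeval y f.reverse := by
  let _ : Invertible x := ⟨y, by rw [mul_comm, h], h⟩
  have := eval₂_reverse_mul_pow (algebraMap K A) x f
  change eval₂ (algebraMap K A) y f.reverse * x ^ f.natDegree = _ at this
  rw [aeval_def, aeval_def, ← this, mul_left_comm, ← mul_pow, mul_comm y x, h, one_pow, mul_one]

/-- Transcendence passes from `a` to `c = (1 - a)⁻¹`. -/
lemma aeval_injective_rotate {a c : A} (hca : c * a = c - 1)
    (ha : Function.Injective (aeval a : K[X] →ₐ[K] A)) :
    Function.Injective (aeval c : K[X] →ₐ[K] A) := by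
  rw [injective_iff_map_eq_zero] at ha ⊢
  intro f hf
  have h1 : aeval (1 - a) f.reverse = 0 := by
    rw [← pow_mul_aeval_eq_aeval_reverse (x := c) (by linear_combination -hca), hf, mul_zero]
  have h2 : f.reverse.comp (1 - X) = 0 := ha _ (by simpa [aeval_comp] using h1)
  have h3 : f.reverse = 0 := by
    have := congrArg (fun p => p.comp (1 - X)) h2
    simpa [comp_assoc] using this
  simpa using h3

/-- Only `c` has a pole at `a = 1`, so a relation between polynomials in `a`, `b` and `c` involves
`c` only through a constant. -/
lemma natDegree_eq_zero_of_relation {a b c : A} (hab : a * b = a - 1) (hca : c * a = c - 1)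
    (ha : Function.Injective (aeval a : K[X] →ₐ[K] A)) {P Q R : K[X]}
    (h : aeval a P + aeval b Q + aeval c R = 0) : R.natDegree = 0 := by
  by_contra hn
  set n := R.natDegree with hn'
  have hR := pow_mul_aeval_eq_aeval_reverse (x := c) (y := 1 - a) (by linear_combination -hca) R
  -- `b = 1 - a⁻¹` with `a⁻¹ = 1 - b`, so `Q(b)` times a power of `a` is a polynomial in `a`.
  obtain ⟨m, F, hF⟩ : ∃ (m : ℕ) (F : K[X]), a ^ m * aeval b Q = aeval a F := by
    have h1 := pow_mul_aeval_eq_aeval_reverse (x := 1 - b) (y := a)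
      (by linear_combination -hab) (Q.comp (1 - X))
    rw [aeval_comp] at h1
    exact ⟨_, _, by simpa using h1⟩
  have key : X ^ m * (1 - X) ^ n * P + (1 - X) ^ n * F + X ^ m * R.reverse.comp (1 - X) = 0 := by
    apply ha
    simp only [map_add, map_mul, map_pow, map_sub, map_one, aeval_X, aeval_comp, map_zero]
    rw [← hR, ← hF]
    linear_combination a ^ m * (1 - a) ^ n * h
  have h0 := congrArg (eval 1) key
  simp only [eval_add, eval_mul, eval_pow, eval_sub, eval_one, eval_X, eval_comp, sub_self,
    zero_pow hn, eval_zero, one_pow] at h0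
  rw [← coeff_zero_eq_eval_zero, coeff_zero_reverse] at h0
  have hz : R = 0 := by simpa using h0
  simp [hn', hz] at hn

/-- The family `1`, `(e j) ^ i` (`j : Fin 3`, `i ≥ 1`) attached to three elements `e 0, e 1, e 2`. -/
def powerFamily (e : Fin 3 → A) : Option (Fin 3 × ℕ+) → A
  | none => 1
  | some (j, i) => e j ^ (i : ℕ)

/-- The polynomial without constant term collecting the coefficients of the powers of `e j` in a
formal linear combination of the members of `powerFamily e`. -/
def collect (K : Type*) [Field K] (j : Fin 3) : (Option (Fin 3 × ℕ+) →₀ K) →ₗ[K] K[X] :=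
  Finsupp.linearCombination K fun
    | none => 0
    | some (k, i) => if k = j then X ^ (i : ℕ) else 0

lemma coeff_collect (j : Fin 3) (i : ℕ+) (l : Option (Fin 3 × ℕ+) →₀ K) :
    (collect K j l).coeff i = l (some (j, i)) := by
  have : (lcoeff K (i : ℕ)) ∘ₗ collect K j = Finsupp.lapply (some (j, i)) := by
    ext o
    rcases o with _ | ⟨k, i'⟩
    · simp [collect]
    · by_cases hk : k = j
      · subst hk
        simp [collect, coeff_X_pow, Finsupp.single_apply, eq_comm]
      · simp [collect, hk]
  exact congrArg (fun f => f l) this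

lemma linearCombination_powerFamily (e : Fin 3 → A) (l : Option (Fin 3 × ℕ+) →₀ K) :
    Finsupp.linearCombination K (powerFamily e) l =
      l none • (1 : A) + ∑ j, aeval (e j) (collect K j l) := by
  have : Finsupp.linearCombination K (powerFamily e) =
      (Finsupp.lapply none).smulRight (1 : A) +
        ∑ j, (aeval (e j) : K[X] →ₐ[K] A).toLinearMap ∘ₗ collect K j := by
    ext o
    rcases o with _ | ⟨k, i⟩
    · simp [collect, powerFamily]
    · simp [collect, powerFamily, apply_ite]
  rw [this]
  simp

lemma linearIndependent_powerFamily {e : Fin 3 → A} (h01 : e 0 * e 1 = e 0 - 1)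
    (h12 : e 1 * e 2 = e 1 - 1) (h20 : e 2 * e 0 = e 2 - 1)
    (h0 : Function.Injective (aeval (e 0) : K[X] →ₐ[K] A)) :
    LinearIndependent K (powerFamily e) := by
  have h2 := aeval_injective_rotate h20 h0
  have h1 := aeval_injective_rotate h12 h2
  have : Nontrivial A := h0.nontrivial
  rw [linearIndependent_iff]
  intro l hl
  have hrel := hl
  rw [linearCombination_powerFamily, Fin.sum_univ_three, ← Algebra.algebraMap_eq_smul_one] at hrel
  -- The constant term is absorbed into one of the two polynomials other than `collect K j l`.
  have d : ∀ j, (collect K j l).natDegree = 0 := by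
    suffices (collect K 0 l).natDegree = 0 ∧ (collect K 1 l).natDegree = 0 ∧
        (collect K 2 l).natDegree = 0 by simpa [Fin.forall_fin_succ] using this
    refine ⟨?_, ?_, ?_⟩
    · refine natDegree_eq_zero_of_relation (P := collect K 1 l + C (l none)) (Q := collect K 2 l)
        h12 h01 h1 ?_
      simp only [map_add, aeval_C]
      linear_combination hrel
    · refine natDegree_eq_zero_of_relation (P := collect K 2 l + C (l none)) (Q := collect K 0 l)
        h20 h12 h2 ?_
      simp only [map_add, aeval_C]
      linear_combination hrel
    · refine natDegree_eq_zero_of_relation (P := collect K 0 l + C (l none)) (Q := collect K 1 l)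
        h01 h20 h0 ?_
      simp only [map_add, aeval_C]
      linear_combination hrel
  have hs : ∀ j i, l (some (j, i)) = 0 := fun j i => by
    rw [← coeff_collect]
    exact coeff_eq_zero_of_natDegree_lt (by rw [d]; exact i.pos)
  have hl0 : l = Finsupp.single none (l none) := by
    ext o
    rcases o with _ | ⟨j, i⟩
    · simp
    · simp [hs]
  rw [hl0] at hl ⊢
  simpa [powerFamily] using hl

/-- The subalgebra of elements whose multiplication maps the submodule `S` into itself. -/
def stabilizerSubalgebra (S : Submodule K A) : Subalgebra K A where
  carrier := {y | ∀ x ∈ S, y * x ∈ S}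
  mul_mem' hy hz x hx := by rw [mul_assoc]; exact hy _ (hz _ hx)
  add_mem' hy hz x hx := by rw [add_mul]; exact S.add_mem (hy _ hx) (hz _ hx)
  algebraMap_mem' r x hx := by rw [← Algebra.smul_def]; exact S.smul_mem r hx

lemma pow_mem_span_powerFamily (e : Fin 3 → A) (j : Fin 3) (i : ℕ) :
    e j ^ i ∈ Submodule.span K (Set.range (powerFamily e)) := by
  rcases Nat.eq_zero_or_pos i with rfl | hi
  · exact Submodule.subset_span ⟨none, by simp [powerFamily]⟩
  · exact Submodule.subset_span ⟨some (j, ⟨i, hi⟩), rfl⟩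

lemma mem_stabilizer_span_powerFamily {e : Fin 3 → A} (h01 : e 0 * e 1 = e 0 - 1)
    (h12 : e 1 * e 2 = e 1 - 1) (h20 : e 2 * e 0 = e 2 - 1) (j : Fin 3) :
    e j ∈ stabilizerSubalgebra (Submodule.span K (Set.range (powerFamily e))) := by
  set S := Submodule.span K (Set.range (powerFamily e)) with hS
  have hp : ∀ k i, e k ^ i ∈ S := pow_mem_span_powerFamily e
  have left : ∀ p q, e p * e q = e p - 1 → ∀ i, e p * e q ^ i ∈ S := by
    intro p q h i
    induction i with
    | zero => simpa using hp p 1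
    | succ i ih =>
      have : e p * e q ^ (i + 1) = e p * e q ^ i - e q ^ i := by linear_combination e q ^ i * h
      rw [this]
      exact S.sub_mem ih (hp q i)
  have right : ∀ p q, e q * e p = e q - 1 → ∀ i, e p * e q ^ i ∈ S := by
    intro p q h i
    cases i with
    | zero => simpa using hp p 1
    | succ i =>
      have : e p * e q ^ (i + 1) = e q ^ (i + 1) - e q ^ i := by linear_combination e q ^ i * h
      rw [this]
      exact S.sub_mem (hp q _) (hp q i)
  have same : ∀ p i, e p * e p ^ i ∈ S := fun p i => by rw [← pow_succ']; exact hp p _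
  have all : ∀ k i, e j * e k ^ i ∈ S := by
    intro k
    fin_cases j <;> fin_cases k
    exacts [same 0, left 0 1 h01, right 0 2 h20, right 1 0 h01, same 1, left 1 2 h12,
      left 2 0 h20, right 2 1 h12, same 2]
  intro x hx
  have hle : S ≤ S.comap (LinearMap.mulLeft K (e j)) := by
    conv_lhs => rw [hS]
    rw [Submodule.span_le]
    rintro _ ⟨_ | ⟨k, i⟩, rfl⟩
    · simpa [powerFamily] using hp j 1
    · exact all k i
  exact hle hx

end Relations

/-- A subalgebra of `A` containing `t` and inverses of `t` and `t - 1` is all of `A`. -/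
lemma mem_subalgebra_of_generators {K : Type*} [Field K] (T : Subalgebra K (LoopAlgCoeff K))
    {u v : LoopAlgCoeff K} (ht : tElt K ∈ T) (hu : u ∈ T) (hv : v ∈ T) (htu : tElt K * u = 1)
    (htv : (tElt K - 1) * v = 1) (z : LoopAlgCoeff K) : z ∈ T := by
  have hpoly : ∀ p : K[X], algebraMap K[X] (LoopAlgCoeff K) p ∈ T := by
    intro p
    have : algebraMap K[X] (LoopAlgCoeff K) p = aeval (tElt K) p := by
      rw [tElt, aeval_algebraMap_apply, aeval_X_left_apply]
    rw [this]
    exact Algebra.adjoin_le (Set.singleton_subset_iff.mpr ht)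
      (aeval_mem_adjoin_singleton K (tElt K))
  have hinv : ∀ s ∈ Submonoid.closure {(X : K[X]), X - 1},
      ∃ w ∈ T, algebraMap K[X] (LoopAlgCoeff K) s * w = 1 := by
    intro s hs
    induction hs using Submonoid.closure_induction with
    | mem s hs =>
      rcases hs with rfl | rfl
      · exact ⟨u, hu, htu⟩
      · exact ⟨v, hv, by rw [map_sub, map_one]; exact htv⟩
    | one => exact ⟨1, T.one_mem, by simp⟩
    | mul x y _ _ hx hy =>
      obtain ⟨w, hw, hxw⟩ := hx
      obtain ⟨w', hw', hyw⟩ := hy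
      refine ⟨w * w', T.mul_mem hw hw', ?_⟩
      rw [map_mul, mul_mul_mul_comm, hxw, hyw, one_mul]
  obtain ⟨⟨p, s⟩, hz⟩ := IsLocalization.surj (Submonoid.closure {(X : K[X]), X - 1}) z
  obtain ⟨w, hw, hsw⟩ := hinv s s.2
  have : z = algebraMap K[X] (LoopAlgCoeff K) p * w := by
    rw [← hz, mul_assoc, hsw, mul_one]
  rw [this]
  exact T.mul_mem (hpoly p) hw

lemma aeval_tElt_injective (K : Type*) [Field K] :
    Function.Injective (aeval (tElt K) : K[X] →ₐ[K] LoopAlgCoeff K) := by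
  have hle : Submonoid.closure {(X : K[X]), X - 1} ≤ nonZeroDivisors K[X] := by
    rw [Submonoid.closure_le]
    rintro s (rfl | rfl)
    · exact mem_nonZeroDivisors_of_ne_zero X_ne_zero
    · exact mem_nonZeroDivisors_of_ne_zero (by simpa using X_sub_C_ne_zero (1 : K))
  have hinj := IsLocalization.injective (LoopAlgCoeff K) hle
  intro p q hpq
  apply hinj
  simpa [tElt, aeval_algebraMap_apply] using hpq

/-- The set `{1} ∪ {tⁱ, (t')ⁱ, (t'')ⁱ : i ≥ 1}` is a basis of the `K`-vector space
`A = K[t, t⁻¹, (t-1)⁻¹]`, where `t' = 1 - t⁻¹` and `t'' = (1-t)⁻¹`. -/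
theorem loopBasisFamily_isBasis (K : Type*) [Field K] [CharZero K] :
    LinearIndependent K (loopBasisFamily K) ∧
    Submodule.span K (Set.range (loopBasisFamily K)) = ⊤ := by
  have ht : IsUnit (tElt K) := IsLocalization.map_units (LoopAlgCoeff K)
    (⟨X, Submonoid.subset_closure (by simp)⟩ : Submonoid.closure {(X : K[X]), X - 1})
  have ht1 : IsUnit (1 - tElt K) := by
    have := (IsLocalization.map_units (LoopAlgCoeff K)
      (⟨X - 1, Submonoid.subset_closure (by simp)⟩ : Submonoid.closure {(X : K[X]), X - 1})).neg
    simpa [tElt] using this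
  have hu := Ring.mul_inverse_cancel _ ht
  have hv := Ring.mul_inverse_cancel _ ht1
  set u := Ring.inverse (tElt K) with hu'
  set v := Ring.inverse (1 - tElt K) with hv'
  let e : Fin 3 → LoopAlgCoeff K := ![tElt K, 1 - u, v]
  have hfam : loopBasisFamily K = powerFamily e := by
    funext o
    rcases o with _ | ⟨j, i⟩
    · rfl
    · fin_cases j <;> rfl
  have h01 : e 0 * e 1 = e 0 - 1 := by
    change tElt K * (1 - u) = tElt K - 1
    linear_combination -hu
  have h12 : e 1 * e 2 = e 1 - 1 := by
    change (1 - u) * v = 1 - u - 1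
    linear_combination -u * hv - v * hu
  have h20 : e 2 * e 0 = e 2 - 1 := by
    change v * tElt K = v - 1
    linear_combination -hv
  rw [hfam]
  refine ⟨linearIndependent_powerFamily h01 h12 h20 (aeval_tElt_injective K), ?_⟩
  set S := Submodule.span K (Set.range (powerFamily e)) with hS
  have hT : ∀ j, e j ∈ stabilizerSubalgebra S := mem_stabilizer_span_powerFamily h01 h12 h20
  have huT : u ∈ stabilizerSubalgebra S := by
    simpa [e] using sub_mem (one_mem _) (hT 1)
  rw [eq_top_iff]
  intro z _
  have hz : z ∈ stabilizerSubalgebra S :=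
    mem_subalgebra_of_generators _ (hT 0) huT (neg_mem (hT 2)) hu
      (by change (tElt K - 1) * -v = 1; linear_combination hv) z
  simpa using hz 1 (by simpa using pow_mem_span_powerFamily (K := K) e 0 0)
end
end

section
/- The K-vector space ⟨A,A⟩ = (A⊗A)/S, for A = K[t, t⁻¹, (t−1)⁻¹], is spanned by ⟨t,t⁻¹⟩ and ⟨t',(t')⁻¹⟩ where t' = 1 − t⁻¹. -/
/-!
Modulo `S` the pairing is antisymmetric and satisfies `⟨a, bc⟩ = ⟨ab, c⟩ + ⟨ac, b⟩`, so
`⟨a, b⟩` behaves like the class of `a db` in `Ω_A / dA`. The Leibniz rule reduces every `⟨a, b⟩`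
to some `⟨f, t⟩`, since `A` is generated by `t`, `t⁻¹`, `(t-1)⁻¹` (`mem_range_of_adjoin`,
`adjoin_loopAlgCoeff`). By partial fractions `A` is spanned by the integer powers of `t` and of
`t - 1` (`zpow_span_top`). For a unit `u`, antisymmetry together with
`⟨a, u ^ n⟩ = n ⟨a u ^ (n - 1), u⟩` gives `(n + 1) ⟨u ^ n, u⟩ = 0`, so in characteristic zero only
`⟨t⁻¹, t⟩` and `⟨(t-1)⁻¹, t-1⟩` survive (`pairing_zpow_self`). Finally
`⟨t'⁻¹, t'⟩ = ⟨t, t⁻¹⟩ + ⟨(t-1)⁻¹, t-1⟩`, so the two given classes span.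
-/

open TensorProduct Polynomial

noncomputable section

/-- The subspace `S ⊆ A ⊗ A` spanned by all `a⊗b + b⊗a` and `ab⊗c + bc⊗a + ca⊗b`. -/
def cycRel (K : Type*) [Field K] (A : Type*) [CommRing A] [Algebra K A] :
    Submodule K (A ⊗[K] A) :=
  Submodule.span K
    ({x | ∃ a b : A, x = a ⊗ₜ b + b ⊗ₜ a} ∪
     {x | ∃ a b c : A, x = (a*b) ⊗ₜ c + (b*c) ⊗ₜ a + (c*a) ⊗ₜ b})

/-- `⟨A,A⟩ = (A ⊗ A)/S`. -/
abbrev CycPair (K : Type*) [Field K] (A : Type*) [CommRing A] [Algebra K A] :=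
  (A ⊗[K] A) ⧸ cycRel K A

/-- `⟨a,b⟩`, the class of `a ⊗ b` in `⟨A,A⟩`. -/
def cycPair (K : Type*) [Field K] {A : Type*} [CommRing A] [Algebra K A] (a b : A) :
    CycPair K A := Submodule.Quotient.mk (a ⊗ₜ b)

/-! ### Cyclic pairings -/

section Pairing

variable {K A P : Type*} [Field K] [CommRing A] [Algebra K A] [AddCommGroup P] [Module K P]

/-- A bilinear pairing that kills the relations spanning `S`, with the cyclic relation put in
the form of a Leibniz rule. -/
structure IsCyclicPairing (B : A →ₗ[K] A →ₗ[K] P) : Prop where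
  antisymm : ∀ a b, B a b = - B b a
  leibniz : ∀ a b c, B a (b * c) = B (a * b) c + B (a * c) b

namespace IsCyclicPairing

variable {B : A →ₗ[K] A →ₗ[K] P}

theorem one_right (h : IsCyclicPairing B) (a : A) : B a 1 = 0 := by
  simpa using h.leibniz a 1 1

theorem algebraMap_right (h : IsCyclicPairing B) (a : A) (k : K) :
    B a (algebraMap K A k) = 0 := by
  rw [Algebra.algebraMap_eq_smul_one, map_smul, h.one_right, smul_zero]

theorem inv_right (h : IsCyclicPairing B) (a : A) (u : Aˣ) :
    B a (u⁻¹ : Aˣ) = - B (a * (u⁻¹ : Aˣ) * (u⁻¹ : Aˣ)) u := by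
  have := h.leibniz (a * (u⁻¹ : Aˣ)) u (u⁻¹ : Aˣ)
  rw [Units.mul_inv, h.one_right, Units.inv_mul_cancel_right] at this
  exact eq_neg_of_add_eq_zero_left this.symm

/-- The analogue of `a d(u ^ n) = n a u ^ (n - 1) du`. -/
theorem zpow_right (h : IsCyclicPairing B) (u : Aˣ) (n : ℤ) :
    ∀ a, B a (u ^ n : Aˣ) = (n : K) • B (a * (u ^ (n - 1) : Aˣ)) u := by
  induction n using Int.induction_on with
  | zero => intro a; simp [h.one_right]
  | succ n ih =>
    intro a
    rw [zpow_add_one, Units.val_mul, h.leibniz, ih]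
    have e : (u * (u ^ ((n : ℤ) - 1) : Aˣ) : A) = (u ^ (n : ℤ) : Aˣ) := by
      rw [← Units.val_mul, ← zpow_one_add]; congr 2; ring
    rw [mul_assoc, e, add_sub_cancel_right]
    push_cast
    module
  | pred n ih =>
    intro a
    rw [zpow_sub_one, Units.val_mul, h.leibniz, h.inv_right, ih]
    have e : (u ^ (-(n : ℤ) - 1 - 1) : Aˣ) = u⁻¹ * u ^ (-(n : ℤ) - 1) := by
      rw [zpow_sub_one, mul_comm]
    have e' : (u ^ (-(n : ℤ) - 1 - 1) : Aˣ) = u ^ (-(n : ℤ)) * u⁻¹ * u⁻¹ := by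
      rw [zpow_sub_one, zpow_sub_one]
    have e1 : a * (u⁻¹ : Aˣ) * (u ^ (-(n : ℤ) - 1) : Aˣ) = a * (u ^ (-(n : ℤ) - 1 - 1) : Aˣ) := by
      rw [e, Units.val_mul, mul_assoc]
    have e2 : a * (u ^ (-(n : ℤ)) : Aˣ) * (u⁻¹ : Aˣ) * (u⁻¹ : Aˣ)
        = a * (u ^ (-(n : ℤ) - 1 - 1) : Aˣ) := by
      rw [e', Units.val_mul, Units.val_mul]; ring
    rw [e1, e2]
    push_cast
    module

/-- For `n ≠ -1` the form `u ^ n du` is exact. -/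
theorem pairing_zpow_self [CharZero K] (h : IsCyclicPairing B) (u : Aˣ) (n : ℤ) (hn : n ≠ -1) :
    B (u ^ n : Aˣ) u = 0 := by
  have h1 := h.zpow_right u n u
  rw [← Units.val_mul, ← zpow_one_add, add_sub_cancel, h.antisymm] at h1
  have h2 : ((n + 1 : ℤ) : K) • B (u ^ n : Aˣ) u = 0 := by
    push_cast
    rw [add_smul, one_smul, ← h1, neg_add_cancel]
  refine (smul_eq_zero.mp h2).resolve_left ?_
  exact_mod_cast fun h0 => hn (by lia)

/-- The analogue of the fact that every differential form on `A` is `f dt` for some `f`. -/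
theorem mem_range_of_adjoin (h : IsCyclicPairing B) (u v : Aˣ) (huv : (u : A) = v + 1)
    (hA : Algebra.adjoin K {(u : A), ((u⁻¹ : Aˣ) : A), ((v⁻¹ : Aˣ) : A)} = ⊤) (a b : A) :
    ∃ f, B a b = B f u := by
  have hv : ∀ a, B a v = B a u := fun a => by rw [huv, map_add, h.one_right, add_zero]
  have hb : b ∈ Algebra.adjoin K {(u : A), ((u⁻¹ : Aˣ) : A), ((v⁻¹ : Aˣ) : A)} := hA ▸ trivial
  induction hb using Algebra.adjoin_induction generalizing a with
  | mem x hx =>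
    rcases hx with rfl | rfl | rfl
    · exact ⟨a, rfl⟩
    · exact ⟨-(a * (u⁻¹ : Aˣ) * (u⁻¹ : Aˣ)), by rw [h.inv_right, map_neg, LinearMap.neg_apply]⟩
    · exact ⟨-(a * (v⁻¹ : Aˣ) * (v⁻¹ : Aˣ)), by
        rw [h.inv_right, map_neg, LinearMap.neg_apply, hv]⟩
  | algebraMap r => exact ⟨0, by rw [h.algebraMap_right, map_zero, LinearMap.zero_apply]⟩
  | add x y _ _ hx hy =>
    obtain ⟨f, hf⟩ := hx a
    obtain ⟨g, hg⟩ := hy a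
    exact ⟨f + g, by rw [map_add, hf, hg, map_add, LinearMap.add_apply]⟩
  | mul x y _ _ hx hy =>
    obtain ⟨f, hf⟩ := hx (a * y)
    obtain ⟨g, hg⟩ := hy (a * x)
    exact ⟨g + f, by rw [h.leibniz, hf, hg, map_add, LinearMap.add_apply]⟩

end IsCyclicPairing

/-! ### Partial fractions -/

/-- The partial fraction expansion of `u⁻¹ v ^ n` when `u = v + e` with `e = ±1`; the sign allows
the roles of `t` and `t - 1` to be exchanged. -/
theorem inv_mul_zpow_mem (N : Submodule K A) (u v : Aˣ) (e : K) (he : e * e = 1)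
    (huv : (u : A) = v + algebraMap K A e) (hu : ((u⁻¹ : Aˣ) : A) ∈ N)
    (hv : ∀ n : ℤ, ((v ^ n : Aˣ) : A) ∈ N) (n : ℤ) :
    ((u⁻¹ : Aˣ) : A) * ((v ^ n : Aˣ) : A) ∈ N := by
  -- `v ^ k = u⁻¹ (v + e) v ^ k` relates the exponents `k + 1` and `k`.
  have key : ∀ k : ℤ, ((v ^ k : Aˣ) : A) = (u⁻¹ : Aˣ) * (v ^ (k + 1) : Aˣ)
      + e • ((u⁻¹ : Aˣ) * (v ^ k : Aˣ) : A) := fun k => by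
    have : ((v ^ k : Aˣ) : A) = (u⁻¹ : Aˣ) * u * (v ^ k : Aˣ) := by simp
    conv_lhs => rw [this, huv]
    rw [zpow_add_one, Units.val_mul, Algebra.smul_def]
    ring
  induction n using Int.induction_on with
  | zero => simpa using hu
  | succ n ih =>
    rw [← sub_eq_of_eq_add (key n)]
    exact N.sub_mem (hv _) (N.smul_mem _ ih)
  | pred n ih =>
    have k := key (-(n : ℤ) - 1)
    rw [sub_add_cancel] at k
    have : ((u⁻¹ : Aˣ) : A) * ((v ^ (-(n : ℤ) - 1) : Aˣ) : A)
        = e • (((v ^ (-(n : ℤ) - 1) : Aˣ) : A) - (u⁻¹ : Aˣ) * (v ^ (-(n : ℤ)) : Aˣ)) := by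
      conv_rhs => rw [k, add_sub_cancel_left, smul_smul, he, one_smul]
    rw [this]
    exact N.smul_mem _ (N.sub_mem (hv _) ih)

/-- Partial fractions: the powers of `t` and of `t - 1` span `A`. -/
theorem zpow_span_top (u v : Aˣ) (huv : (u : A) = v + 1)
    (hA : Algebra.adjoin K {(u : A), ((u⁻¹ : Aˣ) : A), ((v⁻¹ : Aˣ) : A)} = ⊤)
    (N : Submodule K A) (hNu : ∀ n : ℤ, ((u ^ n : Aˣ) : A) ∈ N)
    (hNv : ∀ n : ℤ, ((v ^ n : Aˣ) : A) ∈ N) (x : A) : x ∈ N := by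
  let s : Set A := Set.range (fun n : ℤ => ((u ^ n : Aˣ) : A)) ∪
    Set.range (fun n : ℤ => ((v ^ n : Aˣ) : A))
  let M := Submodule.span K s
  have hMu : ∀ n : ℤ, ((u ^ n : Aˣ) : A) ∈ M := fun n =>
    Submodule.subset_span (Or.inl ⟨n, rfl⟩)
  have hMv : ∀ n : ℤ, ((v ^ n : Aˣ) : A) ∈ M := fun n =>
    Submodule.subset_span (Or.inr ⟨n, rfl⟩)
  have hMN : M ≤ N := Submodule.span_le.mpr (by
    rintro _ (⟨n, rfl⟩ | ⟨n, rfl⟩)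
    exacts [hNu n, hNv n])
  have stable : ∀ z : A, (∀ n : ℤ, z * ((u ^ n : Aˣ) : A) ∈ M) →
      (∀ n : ℤ, z * ((v ^ n : Aˣ) : A) ∈ M) → ∀ y ∈ M, z * y ∈ M := by
    intro z h1 h2 y hy
    have : M ≤ M.comap (LinearMap.mulLeft K z) := Submodule.span_le.mpr (by
      rintro _ (⟨n, rfl⟩ | ⟨n, rfl⟩)
      exacts [h1 n, h2 n])
    exact this hy
  -- `M` is an ideal: its multipliers form a subalgebra containing the generators of `A`.
  have hmul : ∀ y ∈ M, x * y ∈ M := by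
    have hx : x ∈ Algebra.adjoin K {(u : A), ((u⁻¹ : Aˣ) : A), ((v⁻¹ : Aˣ) : A)} :=
      hA ▸ trivial
    induction hx using Algebra.adjoin_induction with
    | mem x hx =>
      rcases hx with rfl | rfl | rfl
      · refine stable _ (fun n => ?_) (fun n => ?_)
        · rw [← Units.val_mul, ← zpow_one_add]; exact hMu _
        · rw [huv, add_mul, one_mul, ← Units.val_mul, ← zpow_one_add]
          exact M.add_mem (hMv _) (hMv _)
      · refine stable _ (fun n => ?_) (inv_mul_zpow_mem M u v 1 (by simp) (by simpa using huv)
          (by simpa using hMu (-1)) hMv)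
        rw [← Units.val_mul, ← zpow_neg_one, ← zpow_add]; exact hMu _
      · refine stable _ (inv_mul_zpow_mem M v u (-1) (by simp) (by simp [huv])
          (by simpa using hMv (-1)) hMu) (fun n => ?_)
        rw [← Units.val_mul, ← zpow_neg_one, ← zpow_add]; exact hMv _
    | algebraMap r => intro y hy; rw [← Algebra.smul_def]; exact M.smul_mem _ hy
    | add a b _ _ ha hb => intro y hy; rw [add_mul]; exact M.add_mem (ha y hy) (hb y hy)
    | mul a b _ _ ha hb => intro y hy; rw [mul_assoc]; exact ha _ (hb y hy)
  simpa using hMN (hmul 1 (by simpa using hMu 0))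

/-! ### Spanning -/

/-- The values of a cyclic pairing lie in any subspace containing `⟨t, t⁻¹⟩` and `⟨t', t'⁻¹⟩`;
here `u = t`, `v = t - 1`, and `t' = v u⁻¹`. -/
theorem IsCyclicPairing.mem_of_two_mem [CharZero K] {B : A →ₗ[K] A →ₗ[K] P}
    (h : IsCyclicPairing B) (u v : Aˣ) (huv : (u : A) = v + 1)
    (hA : Algebra.adjoin K {(u : A), ((u⁻¹ : Aˣ) : A), ((v⁻¹ : Aˣ) : A)} = ⊤)
    (W : Submodule K P) (h1 : B u (u⁻¹ : Aˣ) ∈ W)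
    (h2 : B (v * u⁻¹ : Aˣ) ((v * u⁻¹)⁻¹ : Aˣ) ∈ W) (a b : A) : B a b ∈ W := by
  have hv : ∀ a, B a v = B a u := fun a => by rw [huv, map_add, h.one_right, add_zero]
  have hu1 : B (u⁻¹ : Aˣ) u ∈ W := by
    rw [h.antisymm]; exact W.neg_mem h1
  have hv1 : B (v⁻¹ : Aˣ) v ∈ W := by
    have e : B ((v * u⁻¹)⁻¹ : Aˣ) (v * u⁻¹ : Aˣ) = B u (u⁻¹ : Aˣ) + B (v⁻¹ : Aˣ) v := by
      rw [Units.val_mul, h.leibniz, ← Units.val_mul, ← Units.val_mul]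
      congr 4 <;> simp
    rw [← sub_eq_of_eq_add' e, h.antisymm]
    exact W.sub_mem (W.neg_mem h2) h1
  have hz : ∀ w : Aˣ, B (w⁻¹ : Aˣ) w ∈ W → ∀ n : ℤ, B (w ^ n : Aˣ) w ∈ W := by
    intro w hw n
    by_cases hn : n = -1
    · subst hn; simpa using hw
    · rw [h.pairing_zpow_self w n hn]; exact W.zero_mem
  obtain ⟨f, hf⟩ := h.mem_range_of_adjoin u v huv hA a b
  rw [hf]
  exact zpow_span_top u v huv hA (W.comap (B.flip u)) (hz u hu1)
    (fun n => by simpa [hv] using hz v hv1 n) f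

end Pairing

theorem isCyclicPairing_mk (K A : Type*) [Field K] [CommRing A] [Algebra K A] :
    IsCyclicPairing ((TensorProduct.mk K A A).compr₂ (cycRel K A).mkQ) := by
  have anti : ∀ a b : A, cycPair K a b = - cycPair K b a := fun a b => by
    refine eq_neg_of_add_eq_zero_left ((Submodule.Quotient.mk_eq_zero _).mpr ?_)
    exact Submodule.subset_span (Or.inl ⟨a, b, rfl⟩)
  refine ⟨anti, fun a b c => ?_⟩
  have cyc : cycPair K (a * b) c + cycPair K (b * c) a + cycPair K (c * a) b = 0 :=
    (Submodule.Quotient.mk_eq_zero _).mpr (Submodule.subset_span (Or.inr ⟨a, b, c, rfl⟩))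
  change cycPair K a (b * c) = cycPair K (a * b) c + cycPair K (a * c) b
  rw [anti a, neg_eq_iff_add_eq_zero, mul_comm a c, ← cyc]
  abel

/-- `A` is generated as a `K`-algebra by `t`, `t⁻¹` and `(t - 1)⁻¹`. -/
theorem adjoin_loopAlgCoeff (K : Type*) [Field K] (u v : (LoopAlgCoeff K)ˣ)
    (hu : (u : LoopAlgCoeff K) = algebraMap K[X] _ X)
    (hv : (v : LoopAlgCoeff K) = algebraMap K[X] _ (X - 1)) :
    Algebra.adjoin K {(u : LoopAlgCoeff K), ((u⁻¹ : (LoopAlgCoeff K)ˣ) : LoopAlgCoeff K),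
      ((v⁻¹ : (LoopAlgCoeff K)ˣ) : LoopAlgCoeff K)} = ⊤ := by
  refine eq_top_iff.mpr fun x _ => ?_
  set S := Algebra.adjoin K {(u : LoopAlgCoeff K), ((u⁻¹ : (LoopAlgCoeff K)ˣ) : LoopAlgCoeff K),
      ((v⁻¹ : (LoopAlgCoeff K)ˣ) : LoopAlgCoeff K)} with hS
  have m1 : (u : LoopAlgCoeff K) ∈ S := Algebra.subset_adjoin (by simp)
  have m2 : ((u⁻¹ : (LoopAlgCoeff K)ˣ) : LoopAlgCoeff K) ∈ S := Algebra.subset_adjoin (by simp)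
  have m3 : ((v⁻¹ : (LoopAlgCoeff K)ˣ) : LoopAlgCoeff K) ∈ S := Algebra.subset_adjoin (by simp)
  have hp : ∀ p : K[X], algebraMap K[X] (LoopAlgCoeff K) p ∈ S := fun p => by
    have : algebraMap K[X] (LoopAlgCoeff K) p = aeval (u : LoopAlgCoeff K) p := by
      rw [hu, aeval_algebraMap_apply, aeval_X_left_apply]
    rw [this]
    exact Algebra.adjoin_mono (by simp) (aeval_mem_adjoin_singleton K (u : LoopAlgCoeff K) (p := p))
  have hq : ∀ q ∈ Submonoid.closure {(X : K[X]), X - 1},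
      ∃ y ∈ S, algebraMap K[X] (LoopAlgCoeff K) q * y = 1 := fun q hq => by
    induction hq using Submonoid.closure_induction with
    | mem q hq =>
      rcases hq with rfl | rfl
      · exact ⟨_, m2, by rw [← hu, Units.mul_inv]⟩
      · exact ⟨_, m3, by rw [← hv, Units.mul_inv]⟩
    | one => exact ⟨1, S.one_mem, by simp⟩
    | mul a b _ _ ha hb =>
      obtain ⟨y, hy, ey⟩ := ha
      obtain ⟨z, hz, ez⟩ := hb
      exact ⟨y * z, S.mul_mem hy hz, by rw [map_mul, mul_mul_mul_comm, ey, ez, one_mul]⟩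
  obtain ⟨⟨p, q⟩, hx⟩ := IsLocalization.surj (Submonoid.closure {(X : K[X]), X - 1}) x
  obtain ⟨y, hy, e⟩ := hq q q.2
  have : x = algebraMap K[X] (LoopAlgCoeff K) p * y := by
    rw [← hx, mul_assoc, e, mul_one]
  rw [this]
  exact S.mul_mem (hp p) hy

/-- For `A = K[t, t⁻¹, (t-1)⁻¹]` and `t' = 1 - t⁻¹`, the `K`-vector space
`⟨A,A⟩ = (A⊗A)/S` is spanned by `⟨t,t⁻¹⟩` and `⟨t',(t')⁻¹⟩`. -/
theorem cycPair_spanned_by_two (K : Type*) [Field K] [CharZero K] :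
    let t : LoopAlgCoeff K := tElt K
    let t' : LoopAlgCoeff K := 1 - Ring.inverse t
    Submodule.span K
      ({cycPair K t (Ring.inverse t), cycPair K t' (Ring.inverse t')} :
        Set (CycPair K (LoopAlgCoeff K))) = ⊤ := by
  intro t t'
  have iu : IsUnit t := IsLocalization.map_units (LoopAlgCoeff K)
    (⟨X, Submonoid.subset_closure (by simp)⟩ : Submonoid.closure {(X : K[X]), X - 1})
  have iv : IsUnit (algebraMap K[X] (LoopAlgCoeff K) (X - 1)) :=
    IsLocalization.map_units (LoopAlgCoeff K)
    (⟨X - 1, Submonoid.subset_closure (by simp)⟩ : Submonoid.closure {(X : K[X]), X - 1})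
  obtain ⟨u, hu⟩ := iu
  obtain ⟨v, hv⟩ := iv
  have huv : (u : LoopAlgCoeff K) = v + 1 := by
    rw [hu, hv, map_sub, map_one, sub_add_cancel]; rfl
  have ht' : t' = ((v * u⁻¹ : (LoopAlgCoeff K)ˣ) : LoopAlgCoeff K) := by
    have hv1 : (v : LoopAlgCoeff K) = u - 1 := by rw [huv, add_sub_cancel_right]
    change 1 - Ring.inverse t = _
    rw [← hu, Ring.inverse_unit, Units.val_mul, hv1, sub_mul, Units.mul_inv, one_mul]
  rw [ht', ← hu, Ring.inverse_unit, Ring.inverse_unit]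
  set W := Submodule.span K ({cycPair K (u : LoopAlgCoeff K) (u⁻¹ : (LoopAlgCoeff K)ˣ),
    cycPair K ((v * u⁻¹ : (LoopAlgCoeff K)ˣ) : LoopAlgCoeff K)
      ((v * u⁻¹)⁻¹ : (LoopAlgCoeff K)ˣ)} : Set (CycPair K (LoopAlgCoeff K)))
  have hW := (isCyclicPairing_mk K (LoopAlgCoeff K)).mem_of_two_mem u v huv
    (adjoin_loopAlgCoeff K u v hu hv) W (Submodule.subset_span (Or.inl rfl))
    (Submodule.subset_span (Or.inr rfl))
  refine eq_top_iff.mpr fun x _ => ?_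
  obtain ⟨z, rfl⟩ := Submodule.Quotient.mk_surjective _ x
  induction z using TensorProduct.induction_on with
  | zero => exact W.zero_mem
  | tmul a b => exact hW a b
  | add y z hy hz => exact W.add_mem (hy trivial) (hz trivial)
end
end
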